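/- arXiv:2301.13203 — 2 statements merged into one kernel-verified Lean document; each statement's English description precedes it below -/
import Mathlib

section
/- For every μ ∈ V_n and every derivation A ∈ Der(μ), one has tr(M_μ[A,A*]) = 2‖A*.μ‖², where [A,A*] = AA* − A*A. Consequently tr(M_μ[A,A*]) ≥ 0, with equality if and only if A* ∈ Der(μ). -/
/-!
The operator `Mmap μ` is twice the moment map of the action of `GL_n` on `Vb n`: writing
`⟨·,·⟩` for the Hermitian inner product on `Vb n` and `B.μ` for the infinitesimal action,
`tr (Mmap μ ∘ B) = 2 ⟨μ, B.μ⟩` for every endomorphism `B` (`trace_Mmap_comp`).  Moreover the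
adjoint of `ν ↦ A.ν` is `ν ↦ A*.ν` (`ipV_actV`).  If `A` is a derivation, then
`[A, A*].μ = A.(A*.μ) - A*.(A.μ) = A.(A*.μ)`, and therefore
`tr (Mmap μ ∘ [A, A*]) = 2 ⟨μ, A.(A*.μ)⟩ = 2 ⟨A*.μ, A*.μ⟩ = 2 ‖A*.μ‖²`.
Positivity, and the equality case `A*.μ = 0`, follow from positive definiteness of the norm.
-/

open scoped InnerProductSpace ComplexOrder
open LinearMap

noncomputable section

abbrev E (n : ℕ) := EuclideanSpace ℂ (Fin n)

abbrev Vb (n : ℕ) := E n →ₗ[ℂ] E n →ₗ[ℂ] E n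

def e (n : ℕ) (i : Fin n) : E n := EuclideanSpace.single i 1

def Lop {n : ℕ} (μ : Vb n) (X : E n) : E n →ₗ[ℂ] E n := μ X

def Rop {n : ℕ} (μ : Vb n) (X : E n) : E n →ₗ[ℂ] E n := μ.flip X

def Mmap {n : ℕ} (μ : Vb n) : E n →ₗ[ℂ] E n :=
  (2 : ℂ) • ∑ i, Lop μ (e n i) ∘ₗ adjoint (Lop μ (e n i))
  - (2 : ℂ) • ∑ i, adjoint (Lop μ (e n i)) ∘ₗ Lop μ (e n i)
  - (2 : ℂ) • ∑ i, adjoint (Rop μ (e n i)) ∘ₗ Rop μ (e n i)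

/-- `A` is a derivation of `μ`. -/
def IsDer {n : ℕ} (μ : Vb n) (A : E n →ₗ[ℂ] E n) : Prop :=
  ∀ X Y, A (μ X Y) = μ (A X) Y + μ X (A Y)

def normSq {n : ℕ} (μ : Vb n) : ℝ :=
  ∑ i, ∑ j, ∑ k, ‖(⟪e n k, μ (e n i) (e n j)⟫_ℂ : ℂ)‖ ^ 2

/-- The action `(A.μ)(X,Y) = A μ(X,Y) − μ(AX,Y) − μ(X,AY)` (as a plain function). -/
def actF {n : ℕ} (A : E n →ₗ[ℂ] E n) (μ : Vb n) : E n → E n → E n :=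
  fun X Y => A (μ X Y) - μ (A X) Y - μ X (A Y)

/-- The squared norm on functions `ℂ^n × ℂ^n → ℂ^n`. -/
def normSqF {n : ℕ} (f : E n → E n → E n) : ℝ :=
  ∑ i, ∑ j, ∑ k, ‖(⟪e n k, f (e n i) (e n j)⟫_ℂ : ℂ)‖ ^ 2

/-- The infinitesimal action `A.μ`, bundled as a bilinear map. -/
def actV {n : ℕ} (A : E n →ₗ[ℂ] E n) (μ : Vb n) : Vb n :=
  μ.compr₂ A - μ ∘ₗ A - μ.compl₂ A

/-- The Hermitian inner product on `Vb n`, conjugate-linear in the first argument. -/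
def ipV {n : ℕ} (μ ν : Vb n) : ℂ :=
  ∑ i, ∑ j, ⟪μ (e n i) (e n j), ν (e n i) (e n j)⟫_ℂ

lemma actV_apply {n : ℕ} (A : E n →ₗ[ℂ] E n) (μ : Vb n) (X Y : E n) :
    actV A μ X Y = A (μ X Y) - μ (A X) Y - μ X (A Y) := by
  simp [actV]

lemma trace_eq_sum_e {n : ℕ} (T : E n →ₗ[ℂ] E n) :
    LinearMap.trace ℂ (E n) T = ∑ i, ⟪e n i, T (e n i)⟫_ℂ := by
  simpa [e] using T.trace_eq_sum_inner (EuclideanSpace.basisFun (Fin n) ℂ)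

/-- Both sides equal `tr (S* T B) = tr (B S* T)`. -/
lemma sum_inner_comp {n : ℕ} (S T B : E n →ₗ[ℂ] E n) :
    ∑ i, ⟪S (e n i), T (B (e n i))⟫_ℂ = ∑ i, ⟪S (adjoint B (e n i)), T (e n i)⟫_ℂ := by
  have h := LinearMap.trace_mul_comm ℂ (adjoint S ∘ₗ T) B
  rw [trace_eq_sum_e, trace_eq_sum_e] at h
  simpa [Module.End.mul_apply, adjoint_inner_right, ← adjoint_inner_left] using h

lemma ipV_actV {n : ℕ} (A : E n →ₗ[ℂ] E n) (μ ν : Vb n) :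
    ipV μ (actV A ν) = ipV (actV (adjoint A) μ) ν := by
  have h1 : ∑ i, ∑ j, ⟪μ (e n i) (e n j), ν (A (e n i)) (e n j)⟫_ℂ
      = ∑ i, ∑ j, ⟪μ (adjoint A (e n i)) (e n j), ν (e n i) (e n j)⟫_ℂ := by
    rw [Finset.sum_comm, Finset.sum_comm (f := fun i j =>
      ⟪μ (adjoint A (e n i)) (e n j), ν (e n i) (e n j)⟫_ℂ)]
    exact Finset.sum_congr rfl fun j _ =>
      sum_inner_comp (μ.flip (e n j)) (ν.flip (e n j)) A
  have h2 : ∑ i, ∑ j, ⟪μ (e n i) (e n j), ν (e n i) (A (e n j))⟫_ℂ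
      = ∑ i, ∑ j, ⟪μ (e n i) (adjoint A (e n j)), ν (e n i) (e n j)⟫_ℂ :=
    Finset.sum_congr rfl fun i _ => sum_inner_comp (μ (e n i)) (ν (e n i)) A
  simp only [ipV, actV_apply, inner_sub_left, inner_sub_right, Finset.sum_sub_distrib, h1, h2,
    adjoint_inner_left]

/-- The moment map identity. -/
lemma trace_Mmap_comp {n : ℕ} (μ : Vb n) (B : E n →ₗ[ℂ] E n) :
    LinearMap.trace ℂ (E n) (Mmap μ ∘ₗ B) = 2 * ipV μ (actV B μ) := by
  have h1 (L : E n →ₗ[ℂ] E n) : LinearMap.trace ℂ (E n) ((L ∘ₗ adjoint L) ∘ₗ B)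
      = ∑ j, ⟪L (e n j), B (L (e n j))⟫_ℂ := by
    rw [LinearMap.comp_assoc, LinearMap.trace_comp_comm', trace_eq_sum_e]
    simp [adjoint_inner_right]
  have h2 (L : E n →ₗ[ℂ] E n) : LinearMap.trace ℂ (E n) ((adjoint L ∘ₗ L) ∘ₗ B)
      = ∑ j, ⟪L (e n j), L (B (e n j))⟫_ℂ := by
    rw [trace_eq_sum_e]
    simp [adjoint_inner_right]
  have h3 : ∑ i, ∑ j, ⟪μ (e n i) (e n j), μ (B (e n i)) (e n j)⟫_ℂ
      = ∑ i, ∑ j, ⟪μ (e n j) (e n i), μ (B (e n j)) (e n i)⟫_ℂ := Finset.sum_comm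
  have hsum (f : Fin n → E n →ₗ[ℂ] E n) : (∑ i, f i) ∘ₗ B = ∑ i, f i ∘ₗ B :=
    Finset.sum_mul (R := Module.End ℂ (E n)) Finset.univ f B
  simp only [Mmap, LinearMap.sub_comp, LinearMap.smul_comp, hsum, map_sub,
    map_smul, map_sum, h1, h2, ipV, actV_apply, inner_sub_right, Finset.sum_sub_distrib, h3,
    Lop, Rop, LinearMap.flip_apply, smul_eq_mul]
  ring

lemma sum_norm_inner_e {n : ℕ} (v : E n) :
    ∑ k, ‖(⟪e n k, v⟫_ℂ : ℂ)‖ ^ 2 = ‖v‖ ^ 2 := by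
  simpa [e] using (EuclideanSpace.basisFun (Fin n) ℂ).sum_sq_norm_inner_right v

lemma ipV_self {n : ℕ} (A : E n →ₗ[ℂ] E n) (μ : Vb n) :
    ipV (actV A μ) (actV A μ) = (normSqF (actF A μ) : ℂ) := by
  simp only [ipV, normSqF, sum_norm_inner_e, actF, actV_apply, inner_self_eq_norm_sq_to_K]
  push_cast
  rfl

lemma normSqF_nonneg {n : ℕ} (f : E n → E n → E n) : 0 ≤ normSqF f := by
  unfold normSqF
  positivity

lemma normSqF_actF_eq_zero {n : ℕ} (A : E n →ₗ[ℂ] E n) (μ : Vb n) :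
    normSqF (actF A μ) = 0 ↔ IsDer μ A := by
  constructor
  · intro h
    have h0 (i j : Fin n) : actV A μ (e n i) (e n j) = 0 := by
      simp only [normSqF, sum_norm_inner_e] at h
      rw [Finset.sum_eq_zero_iff_of_nonneg (fun _ _ => by positivity)] at h
      have h' := h i (Finset.mem_univ i)
      rw [Finset.sum_eq_zero_iff_of_nonneg (fun _ _ => by positivity)] at h'
      simpa [actF, actV_apply] using h' j (Finset.mem_univ j)
    have hz : actV A μ = 0 := by
      refine (EuclideanSpace.basisFun (Fin n) ℂ).toBasis.ext fun i => ?_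
      refine (EuclideanSpace.basisFun (Fin n) ℂ).toBasis.ext fun j => ?_
      simpa [e] using h0 i j
    intro X Y
    have hXY := actV_apply A μ X Y
    rw [hz, sub_sub] at hXY
    exact sub_eq_zero.mp hXY.symm
  · intro h
    simp [normSqF, actF, h _ _]

lemma actV_commutator {n : ℕ} (μ : Vb n) (A C : E n →ₗ[ℂ] E n) (hDer : IsDer μ A) :
    actV (A ∘ₗ C - C ∘ₗ A) μ = actV A (actV C μ) := by
  ext1 X
  ext1 Y
  simp only [actV_apply, LinearMap.sub_apply, LinearMap.comp_apply, map_sub, hDer _ _, map_add]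
  abel

/-- For `A ∈ Der(μ)`: `tr(M_μ[A,A*]) = 2‖A*.μ‖² ≥ 0`, with equality iff `A* ∈ Der(μ)`. -/
theorem trace_Mmap_commutator {n : ℕ} (μ : Vb n) (A : E n →ₗ[ℂ] E n)
    (hDer : IsDer μ A) :
    LinearMap.trace ℂ (E n) (Mmap μ ∘ₗ (A ∘ₗ adjoint A - adjoint A ∘ₗ A))
        = ((2 * normSqF (actF (adjoint A) μ) : ℝ) : ℂ) ∧
    0 ≤ LinearMap.trace ℂ (E n) (Mmap μ ∘ₗ (A ∘ₗ adjoint A - adjoint A ∘ₗ A)) ∧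
    (LinearMap.trace ℂ (E n) (Mmap μ ∘ₗ (A ∘ₗ adjoint A - adjoint A ∘ₗ A)) = 0
      ↔ IsDer μ (adjoint A)) := by
  have key : LinearMap.trace ℂ (E n) (Mmap μ ∘ₗ (A ∘ₗ adjoint A - adjoint A ∘ₗ A))
      = ((2 * normSqF (actF (adjoint A) μ) : ℝ) : ℂ) := by
    rw [trace_Mmap_comp, actV_commutator μ A _ hDer, ipV_actV, ipV_self]
    push_cast
    rfl
  refine ⟨key, ?_, ?_⟩
  · rw [key]
    exact_mod_cast mul_nonneg zero_le_two (normSqF_nonneg _)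
  · rw [key, ← normSqF_actF_eq_zero]
    norm_cast
    simp
end
end

section
/- Let μ ∈ V_3 be the cross-product Lie bracket on ℂ³ (a model of the semisimple Lie algebra sl(2,ℂ) ≅ so(3,ℂ)) determined by μ(e₁,e₂) = e₃ = −μ(e₂,e₁), μ(e₂,e₃) = e₁ = −μ(e₃,e₂), μ(e₃,e₁) = e₂ = −μ(e₁,e₃), and μ(e_i,e_i) = 0. Then M_μ = −4·I, and F₃([μ]) = tr(M_μ²)/‖μ‖⁴ = 4/3; in particular [μ] attains the minimum value 4/n (with n = 3) of the square norm of the moment map F₃ on ℙV₃. -/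
/-! The inequality rests on two facts valid in every dimension: `M_ν` is self-adjoint, and
`tr M_ν = -2 ‖ν‖²` (the two sums of left multiplications have the same trace). Positivity of
`tr (A* A)` for `A = M_ν + c` with `c = 2‖ν‖²/3` then gives `tr M_ν² ≥ 4‖ν‖⁴/3`; this is
Cauchy–Schwarz for the Hilbert–Schmidt product of `M_ν` with the identity.

For the cross product every `L_i` is skew-adjoint and `R_i = -L_i`, hence
`M_μ = 2 ∑ L_i² = -4 I`, from which `tr M_μ² = 48` and `‖μ‖² = 6`. -/

open scoped InnerProductSpace ComplexOrder
open LinearMap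

noncomputable section

lemma e_eq_basisFun (n : ℕ) (i : Fin n) : e n i = EuclideanSpace.basisFun (Fin n) ℂ i := by
  simp [e]

lemma trace_adjoint_comp_self {n : ℕ} (A : E n →ₗ[ℂ] E n) :
    LinearMap.trace ℂ (E n) (adjoint A ∘ₗ A) = ((∑ j, ‖A (e n j)‖ ^ 2 : ℝ) : ℂ) := by
  rw [LinearMap.trace_eq_sum_inner _ (EuclideanSpace.basisFun (Fin n) ℂ)]
  rw [Complex.ofReal_sum]
  refine Finset.sum_congr rfl fun j _ => ?_
  rw [← e_eq_basisFun, LinearMap.comp_apply, LinearMap.adjoint_inner_right,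
    inner_self_eq_norm_sq_to_K, Complex.ofReal_pow]
  rfl

lemma normSq_eq {n : ℕ} (ν : Vb n) : normSq ν = ∑ i, ∑ j, ‖ν (e n i) (e n j)‖ ^ 2 := by
  unfold normSq
  refine Finset.sum_congr rfl fun i _ => Finset.sum_congr rfl fun j _ => ?_
  simp_rw [e_eq_basisFun]
  exact (EuclideanSpace.basisFun (Fin n) ℂ).sum_sq_norm_inner_right _

lemma normSq_pos {n : ℕ} {ν : Vb n} (hν : ν ≠ 0) : 0 < normSq ν := by
  rw [normSq_eq]
  refine lt_of_le_of_ne (by positivity) fun h => hν ?_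
  have h1 := (Finset.sum_eq_zero_iff_of_nonneg (fun i _ => by positivity)).1 h.symm
  refine (EuclideanSpace.basisFun (Fin n) ℂ).toBasis.ext fun i => ?_
  refine (EuclideanSpace.basisFun (Fin n) ℂ).toBasis.ext fun j => ?_
  have h2 := (Finset.sum_eq_zero_iff_of_nonneg (fun i _ => by positivity)).1
    (h1 i (Finset.mem_univ i)) j (Finset.mem_univ j)
  simpa [e] using h2

lemma adjoint_Mmap {n : ℕ} (ν : Vb n) : adjoint (Mmap ν) = Mmap ν := by
  have h2 : starRingEnd ℂ 2 = 2 := Complex.conj_ofNat 2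
  simp only [Mmap, map_sub, map_smulₛₗ, map_sum, LinearMap.adjoint_comp,
    LinearMap.adjoint_adjoint, h2]

/-- The traces of `∑ L_i L_i*` and `∑ L_i* L_i` cancel, so only the right multiplications
contribute. -/
lemma trace_Mmap {n : ℕ} (ν : Vb n) :
    LinearMap.trace ℂ (E n) (Mmap ν) = ((-2 * normSq ν : ℝ) : ℂ) := by
  have hc : ∀ i, LinearMap.trace ℂ (E n) (Lop ν (e n i) ∘ₗ adjoint (Lop ν (e n i))) =
      LinearMap.trace ℂ (E n) (adjoint (Lop ν (e n i)) ∘ₗ Lop ν (e n i)) :=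
    fun i => LinearMap.trace_comp_comm' _ _
  simp only [Mmap, map_sub, map_smul, map_sum, hc, trace_adjoint_comp_self]
  rw [normSq_eq, Finset.sum_comm]
  simp [Rop]

lemma trace_Mmap_sq_ge (ν : Vb 3) :
    4 / 3 * normSq ν ^ 2 ≤ (LinearMap.trace ℂ (E 3) (Mmap ν ∘ₗ Mmap ν)).re := by
  -- Since `tr M = -2‖ν‖²`, this `A` is the traceless part of `M`.
  let A : E 3 →ₗ[ℂ] E 3 := Mmap ν + ((2 / 3 * normSq ν : ℝ) : ℂ) • LinearMap.id
  have hA : adjoint A = A := by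
    simp only [A, map_add, adjoint_Mmap, map_smulₛₗ, Complex.conj_ofReal]
    congr 2
    exact LinearMap.adjoint_id
  have h := trace_adjoint_comp_self A
  have hsq : A ∘ₗ A = Mmap ν ∘ₗ Mmap ν + ((4 / 3 * normSq ν : ℝ) : ℂ) • Mmap ν
      + ((4 / 9 * normSq ν ^ 2 : ℝ) : ℂ) • LinearMap.id := by
    ext1 x
    simp only [A, LinearMap.comp_apply, LinearMap.add_apply, LinearMap.smul_apply,
      LinearMap.id_apply, map_add, map_smul]
    push_cast
    module
  rw [hA, hsq, map_add, map_add, map_smul, map_smul, trace_Mmap, LinearMap.trace_id] at h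
  have h' := congrArg Complex.re h
  have hn : 0 ≤ ∑ j, ‖A (e 3 j)‖ ^ 2 := by positivity
  simp only [Complex.add_re, smul_eq_mul, Complex.re_ofReal_mul, Complex.ofReal_re,
    finrank_euclideanSpace, Fintype.card_fin] at h'
  norm_num at h'
  nlinarith

/-- The cross-product Lie bracket on `ℂ³` (a model of `sl(2,ℂ) ≅ so(3,ℂ)`) satisfies
`M_μ = −4·I` and `F₃([μ]) = 4/3`; in particular it attains the minimum value `4/3 = 4/n`
of the square norm of the moment map on `ℙV₃`. -/
theorem crossProduct_minimum (μ : Vb 3)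
    (h01 : μ (e 3 0) (e 3 1) = e 3 2)
    (h10 : μ (e 3 1) (e 3 0) = - e 3 2)
    (h12 : μ (e 3 1) (e 3 2) = e 3 0)
    (h21 : μ (e 3 2) (e 3 1) = - e 3 0)
    (h20 : μ (e 3 2) (e 3 0) = e 3 1)
    (h02 : μ (e 3 0) (e 3 2) = - e 3 1)
    (h00 : μ (e 3 0) (e 3 0) = 0)
    (h11 : μ (e 3 1) (e 3 1) = 0)
    (h22 : μ (e 3 2) (e 3 2) = 0) :
    Mmap μ = (-4 : ℂ) • (LinearMap.id : E 3 →ₗ[ℂ] E 3) ∧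
    LinearMap.trace ℂ (E 3) (Mmap μ ∘ₗ Mmap μ) / ((normSq μ : ℂ)) ^ 2 = 4 / 3 ∧
    (∀ ν : Vb 3, ν ≠ 0 →
      (4 / 3 : ℝ) ≤ (LinearMap.trace ℂ (E 3) (Mmap ν ∘ₗ Mmap ν)).re / (normSq ν) ^ 2) := by
  have hL : ∀ i, adjoint (Lop μ (e 3 i)) = - Lop μ (e 3 i) := by
    intro i
    symm
    rw [LinearMap.eq_adjoint_iff_basis (EuclideanSpace.basisFun (Fin 3) ℂ).toBasis
      (EuclideanSpace.basisFun (Fin 3) ℂ).toBasis]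
    intro a b
    simp only [OrthonormalBasis.coe_toBasis, ← e_eq_basisFun, Lop, LinearMap.neg_apply]
    fin_cases i <;> fin_cases a <;> fin_cases b <;>
      simp [h01, h10, h12, h21, h20, h02, h00, h11, h22] <;>
      simp [e, EuclideanSpace.inner_single_left]
  have hR : ∀ i, Rop μ (e 3 i) = - Lop μ (e 3 i) := by
    intro i
    refine (EuclideanSpace.basisFun (Fin 3) ℂ).toBasis.ext fun a => ?_
    simp only [OrthonormalBasis.coe_toBasis, ← e_eq_basisFun, Lop, Rop, LinearMap.neg_apply,
      LinearMap.flip_apply]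
    fin_cases i <;> fin_cases a <;>
      simp [h01, h10, h12, h21, h20, h02, h00, h11, h22]
  have hM : Mmap μ = (-4 : ℂ) • (LinearMap.id : E 3 →ₗ[ℂ] E 3) := by
    refine (EuclideanSpace.basisFun (Fin 3) ℂ).toBasis.ext fun a => ?_
    simp only [OrthonormalBasis.coe_toBasis, ← e_eq_basisFun, Mmap, hR, map_neg, hL]
    fin_cases a <;>
      simp [Fin.sum_univ_three, Lop, h01, h10, h12, h21, h20, h02, h00, h11, h22] <;>
      module
  have hN : normSq μ = 6 := by
    rw [normSq_eq]
    simp [Fin.sum_univ_three, h01, h10, h12, h21, h20, h02, h00, h11, h22]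
    simp [e]
    norm_num
  refine ⟨hM, ?_, fun ν hν => ?_⟩
  · rw [hM, hN, LinearMap.smul_comp, LinearMap.comp_smul, LinearMap.id_comp, map_smul, map_smul,
      LinearMap.trace_id]
    simp
    norm_num
  · rw [le_div_iff₀ (pow_pos (normSq_pos hν) 2)]
    exact trace_Mmap_sq_ge ν
end
end
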